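/- arXiv:1509.07235 — 3 statements merged into one kernel-verified Lean document; each statement's English description precedes it below -/
import Mathlib

section
/- Let W be an L_n-injective R-module and let 0 → W → E^0 → E^1 → ⋯ → E^{m-1} → W' → 0 be exact with each E^i injective (so W' is an m-th cosyzygy of W). Then W' is L_{n+m}-injective. -/
open CategoryTheory

/-- Flatness of a module over an arbitrary (possibly noncommutative) ring,
via the equational criterion: every relation is a consequence of trivial relations. -/
def IsFlatMod (R : Type) [Ring R] (M : Type) [AddCommGroup M] [Module R M] : Prop :=
  ∀ (ι : Type) (_ : Fintype ι) (r : ι → R) (x : ι → M),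
    (∑ i, r i • x i = 0) →
      ∃ (κ : Type) (_ : Fintype κ) (a : ι → κ → R) (y : κ → M),
        (∀ i, x i = ∑ j, a i j • y j) ∧ ∀ j, (∑ i, r i * a i j) = 0

variable (R : Type) [Ring R]

/-- `Ext^n_R(M, N) = 0`. -/
def extVanish (n : ℕ) (M N : ModuleCat.{0} R) : Prop :=
  Subsingleton (((Ext ℤ (ModuleCat.{0} R) n).obj (Opposite.op M)).obj N)

/-- `M` has flat dimension at most `n`. -/
def fdLE : ℕ → ModuleCat.{0} R → Prop
  | 0, M => IsFlatMod R M
  | n+1, M => ∃ (K F : ModuleCat.{0} R) (f : K ⟶ F) (g : F ⟶ M),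
      IsFlatMod R F ∧ Function.Injective f ∧ Function.Surjective g ∧
        Function.Exact f g ∧ fdLE n K

/-- `W` is `L_n`-injective: `Ext^1_R(M, W) = 0` for every `M` of flat dimension at most `n`. -/
def LnInj (n : ℕ) (W : ModuleCat.{0} R) : Prop :=
  ∀ M : ModuleCat.{0} R, fdLE R n M → extVanish R 1 M W

/-- `Cosyzygy R m W W'` : `W'` is an `m`-th cosyzygy of `W`, i.e. there is an exact
sequence `0 → W → E^0 → ⋯ → E^{m-1} → W' → 0` with all `E^i` injective. -/
def Cosyzygy : ℕ → ModuleCat.{0} R → ModuleCat.{0} R → Prop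
  | 0, W, W' => ∃ e : W ⟶ W', Function.Bijective e
  | m+1, W, W' => ∃ (E C : ModuleCat.{0} R) (f : W ⟶ E) (g : E ⟶ C),
      Injective E ∧ Function.Injective f ∧ Function.Surjective g ∧
        Function.Exact f g ∧ Cosyzygy m C W'

/-!
The proof is dimension shifting in both variables. If `F` is flat and `0 → K → P → F → 0` is exact
with `P` projective, then `K` is flat; hence vanishing of `Ext¹(-, W)` on flat modules propagates
to all higher `Ext`. Shifting along flat resolutions then gives `Ext^{m+1}(M, W) = 0` whenever `M`
has flat dimension at most `n + m`, and `Ext^{m+1}(M, W) ≅ Ext¹(M, W')` because `W'` is an `m`-th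
cosyzygy of `W`.
-/

open scoped Matrix

section DimensionShifting

universe w v u

variable {C : Type u} [Category.{v} C] [Abelian C]

lemma subsingleton_ext_succ_iff_abelianExt (A : Type*) [Ring A] [Linear A C] [EnoughProjectives C]
    [HasExt.{w} C] (n : ℕ) (X Y : C) :
    Subsingleton (((Ext A C (n + 1)).obj (Opposite.op X)).obj Y) ↔
      Subsingleton (Abelian.Ext.{w} X Y (n + 1)) := by
  let P := ProjectiveResolution.of X
  have cocycle_iff : Subsingleton (((Ext A C (n + 1)).obj (Opposite.op X)).obj Y) ↔
      ∀ f : P.complex.X (n + 1) ⟶ Y, P.complex.d (n + 2) (n + 1) ≫ f = 0 →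
        ∃ g : P.complex.X n ⟶ Y, P.complex.d (n + 1) n ≫ g = f := by
    rw [(P.isoExt (R := A) (n + 1) Y).toLinearEquiv.toEquiv.subsingleton_congr,
      ← ModuleCat.isZero_iff_subsingleton, ← HomologicalComplex.exactAt_iff_isZero_homology,
      HomologicalComplex.exactAt_iff' _ n (n + 1) (n + 2) (by simp) (by simp),
      ShortComplex.moduleCat_exact_iff]
    rfl
  rw [cocycle_iff]
  constructor
  · refine fun h ↦ subsingleton_of_forall_eq 0 fun α ↦ ?_
    obtain ⟨f, hf, rfl⟩ := P.extMk_surjective α (n + 2) rfl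
    exact (P.extMk_eq_zero_iff f (n + 2) rfl hf n rfl).2 (h f hf)
  · exact fun _ f hf ↦ (P.extMk_eq_zero_iff f (n + 2) rfl hf n rfl).1 (Subsingleton.elim _ _)

variable [HasExt.{w} C] {S : ShortComplex C} {n : ℕ}

lemma subsingleton_ext_from_X₃ (hS : S.ShortExact) {Y : C}
    (h₁ : Subsingleton (Abelian.Ext.{w} S.X₁ Y n))
    (h₂ : Subsingleton (Abelian.Ext.{w} S.X₂ Y (n + 1))) :
    Subsingleton (Abelian.Ext.{w} S.X₃ Y (n + 1)) := by
  refine subsingleton_of_forall_eq 0 fun α ↦ ?_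
  obtain ⟨β, rfl⟩ := Abelian.Ext.contravariant_sequence_exact₃ hS Y α
    (Subsingleton.elim _ _) (Nat.add_comm 1 n)
  rw [Subsingleton.elim β 0, Abelian.Ext.comp_zero]

lemma subsingleton_ext_to_X₃ (hS : S.ShortExact) {X : C}
    (h₂ : Subsingleton (Abelian.Ext.{w} X S.X₂ n))
    (h₁ : Subsingleton (Abelian.Ext.{w} X S.X₁ (n + 1))) :
    Subsingleton (Abelian.Ext.{w} X S.X₃ n) := by
  refine subsingleton_of_forall_eq 0 fun α ↦ ?_
  obtain ⟨β, rfl⟩ := Abelian.Ext.covariant_sequence_exact₃ X hS α rfl (Subsingleton.elim _ _)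
  rw [Subsingleton.elim β 0, Abelian.Ext.zero_comp]

end DimensionShifting

section ShortExact

universe v u

variable {A : Type u} [Ring A] {X Y Z : ModuleCat.{v} A}

lemma exists_shortExact_of_exact {f : X ⟶ Y} {g : Y ⟶ Z} (hf : Function.Injective f)
    (hg : Function.Surjective g) (hfg : Function.Exact f g) :
    ∃ w : f ≫ g = 0, (ShortComplex.mk f g w).ShortExact :=
  have w : f ≫ g = 0 := ModuleCat.hom_ext (LinearMap.ext hfg.apply_apply_eq_zero)
  ⟨w, ModuleCat.shortComplex_shortExact _ hfg hf hg⟩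

end ShortExact

section Flat

lemma sum_smul_sum_smul_eq_vecMul {A ι κ M : Type*} [Semiring A] [AddCommMonoid M]
    [Module A M] [Fintype ι] [Fintype κ] (r : ι → A) (a : Matrix ι κ A) (y : κ → M) :
    ∑ i, r i • ∑ j, a i j • y j = ∑ j, (r ᵥ* a) j • y j := by
  simp only [Finset.smul_sum, smul_smul, Matrix.vecMul, dotProduct, Finset.sum_smul]
  exact Finset.sum_comm

variable {R} {K P F : Type} [AddCommGroup K] [Module R K] [AddCommGroup P] [Module R P]
  [AddCommGroup F] [Module R F]

lemma IsFlatMod.of_projective [Module.Projective R P] : IsFlatMod R P := by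
  classical
  intro ι _ r x hx
  obtain ⟨σ, hσ⟩ := Module.projective_def.1 ‹Module.Projective R P›
  let S : Finset P := Finset.univ.biUnion fun i ↦ (σ (x i)).support
  have mem_supported (i : ι) : σ (x i) ∈ Finsupp.supported R R (S : Set P) :=
    Finset.coe_subset.2 <|
      Finset.subset_biUnion_of_mem (fun i ↦ (σ (x i)).support) (Finset.mem_univ i)
  refine ⟨S, inferInstance, fun i p ↦ σ (x i) p, fun p ↦ p, fun i ↦ ?_, fun p ↦ ?_⟩
  · calc x i = Finsupp.linearCombination R id (σ (x i)) := (hσ (x i)).symm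
      _ = ∑ p ∈ S, σ (x i) p • p :=
        Finsupp.linearCombination_apply_of_mem_supported R (mem_supported i)
      _ = ∑ p : S, σ (x i) p • (p : P) := (Finset.sum_coe_sort S _).symm
  · simpa using DFunLike.congr_fun (congrArg σ hx) p.1

lemma IsFlatMod.exists_factorization (hF : IsFlatMod R F) {ρ : Type*} {ι : Type} [Fintype ι]
    (A : Matrix ρ ι R) (x : ι → F) (s : Finset ρ) (hx : ∀ p ∈ s, ∑ i, A p i • x i = 0) :
    ∃ (κ : Type) (_ : Fintype κ) (B : Matrix ι κ R) (y : κ → F),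
      (∀ i, x i = ∑ j, B i j • y j) ∧ ∀ p ∈ s, A p ᵥ* B = 0 := by
  classical
  induction s using Finset.induction_on with
  | empty => exact ⟨ι, inferInstance, 1, x, by simp [Matrix.one_apply], by simp⟩
  | insert p s _ ih =>
    obtain ⟨κ, _, B, y, hy, hB⟩ := ih fun q hq ↦ hx q (Finset.mem_insert_of_mem hq)
    have relation : ∑ j, (A p ᵥ* B) j • y j = 0 := by
      rw [← sum_smul_sum_smul_eq_vecMul]
      simpa only [← hy] using hx p (Finset.mem_insert_self p s)
    obtain ⟨μ, _, D, z, hz, hD⟩ := hF κ inferInstance (A p ᵥ* B) y relation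
    refine ⟨μ, inferInstance, B * Matrix.of D, z, fun i ↦ ?_, ?_⟩
    · rw [hy i]
      simp only [hz]
      exact sum_smul_sum_smul_eq_vecMul (B i) (Matrix.of D) z
    · simp only [Finset.forall_mem_insert, ← Matrix.vecMul_vecMul]
      exact ⟨funext hD, fun q hq ↦ by rw [hB q hq, Matrix.zero_vecMul]⟩

lemma IsFlatMod.left_of_exact {f : K →ₗ[R] P} {g : P →ₗ[R] F} (hP : IsFlatMod R P)
    (hF : IsFlatMod R F) (hf : Function.Injective f) (hg : Function.Surjective g)
    (hfg : Function.Exact f g) : IsFlatMod R K := by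
  intro ι _ r x hx
  obtain ⟨κ, _, A, y, hy, hA⟩ := hP ι inferInstance r (fun i ↦ f (x i))
    (by simpa using congrArg f hx)
  have relations (i : ι) : ∑ j, A i j • g (y j) = 0 := by
    simpa [hy] using hfg.apply_apply_eq_zero (x i)
  obtain ⟨μ, _, B, z, hz, hB⟩ :=
    hF.exists_factorization (Matrix.of A) (g ∘ y) Finset.univ fun i _ ↦ relations i
  choose z' hz' using fun l ↦ hg (z l)
  -- Subtracting lifts of the relations `hz` moves the generators `y j` into the kernel of `g`.
  have map_corrected_eq_zero (j : κ) : g (y j - ∑ l, B j l • z' l) = 0 := by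
    simpa [hz', sub_eq_zero] using hz j
  choose k hk using fun j ↦ (hfg _).1 (map_corrected_eq_zero j)
  refine ⟨κ, inferInstance, A, k, fun i ↦ hf ?_, hA⟩
  have sum_correction_eq_zero : ∑ j, A i j • ∑ l, B j l • z' l = 0 := by
    simpa [show A i ᵥ* B = 0 from hB i (Finset.mem_univ i)] using
      sum_smul_sum_smul_eq_vecMul (A i) B z'
  calc f (x i) = ∑ j, A i j • y j - ∑ j, A i j • ∑ l, B j l • z' l := by
        rw [sum_correction_eq_zero, sub_zero, hy]
    _ = f (∑ j, A i j • k j) := by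
        simp only [map_sum, map_smul, hk, smul_sub, Finset.sum_sub_distrib]

end Flat

section ExtVanishing

variable {R} {n : ℕ} {W : ModuleCat.{0} R}

lemma fdLE_of_isFlatMod {F : ModuleCat.{0} R} (hF : IsFlatMod R F) : ∀ n, fdLE R n F
  | 0 => hF
  | n + 1 => ⟨ModuleCat.of R PUnit, F, 0, 𝟙 F, hF, Function.injective_of_subsingleton _,
      Function.surjective_id, (LinearMap.exact_zero_iff_injective PUnit LinearMap.id).2
        Function.injective_id, fdLE_of_isFlatMod IsFlatMod.of_projective n⟩

lemma LnInj.subsingleton_ext_of_isFlatMod (hW : LnInj R n W) {F : ModuleCat.{0} R}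
    (hF : IsFlatMod R F) (k : ℕ) : Subsingleton (Abelian.Ext.{0} F W (k + 1)) := by
  induction k generalizing F with
  | zero => exact (subsingleton_ext_succ_iff_abelianExt ℤ 0 F W).1 (hW F (fdLE_of_isFlatMod hF n))
  | succ k ih =>
    have hS := F.shortExact_projectiveShortComplex
    have flat_kernel : IsFlatMod R F.projectiveShortComplex.X₁ :=
      IsFlatMod.of_projective.left_of_exact hF hS.moduleCat_injective_f hS.moduleCat_surjective_g
        ((ShortComplex.ShortExact.moduleCat_exact_iff_function_exact _).1 hS.exact)
    exact subsingleton_ext_from_X₃ hS (ih flat_kernel)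
      (Abelian.Ext.subsingleton_of_projective _ _ _)

lemma LnInj.subsingleton_ext_of_fdLE (hW : LnInj R n W) {k : ℕ} {M : ModuleCat.{0} R}
    (hM : fdLE R (n + k) M) : Subsingleton (Abelian.Ext.{0} M W (k + 1)) := by
  induction k generalizing M with
  | zero => exact (subsingleton_ext_succ_iff_abelianExt ℤ 0 M W).1 (hW M hM)
  | succ k ih =>
    obtain ⟨K, F, f, g, hF, hf, hg, hfg, hK⟩ := hM
    obtain ⟨_, hS⟩ := exists_shortExact_of_exact hf hg hfg
    exact subsingleton_ext_from_X₃ hS (ih hK) (hW.subsingleton_ext_of_isFlatMod hF (k + 1))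

lemma Cosyzygy.subsingleton_ext {m k : ℕ} {W' M : ModuleCat.{0} R} (hW' : Cosyzygy R m W W')
    (h : Subsingleton (Abelian.Ext.{0} M W (k + m + 1))) :
    Subsingleton (Abelian.Ext.{0} M W' (k + 1)) := by
  induction m generalizing W with
  | zero =>
    obtain ⟨e, he⟩ := hW'
    let i : W ≅ W' := (LinearEquiv.ofBijective e.hom he).toModuleIso
    exact ((Abelian.extFunctorObj M (k + 1)).mapIso
      i).addCommGroupIsoToAddEquiv.toEquiv.subsingleton_congr.1 h
  | succ m ih =>
    obtain ⟨E, C, f, g, _, hf, hg, hfg, hC⟩ := hW'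
    obtain ⟨_, hS⟩ := exists_shortExact_of_exact hf hg hfg
    exact ih hC (subsingleton_ext_to_X₃ hS
      (Abelian.Ext.subsingleton_of_injective _ _ _) h)

end ExtVanishing

/-- If `W` is `L_n`-injective and `W'` is an `m`-th cosyzygy of `W`,
then `W'` is `L_{n+m}`-injective. -/
theorem stmt6 (n m : ℕ) (W W' : ModuleCat.{0} R)
    (hW : LnInj R n W) (hcs : Cosyzygy R m W W') :
    LnInj R (n + m) W' := by
  intro M hM
  have ext_W : Subsingleton (Abelian.Ext.{0} M W (m + 1)) := hW.subsingleton_ext_of_fdLE hM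
  have ext_W' : Subsingleton (Abelian.Ext.{0} M W' 1) :=
    hcs.subsingleton_ext (k := 0) (by rwa [Nat.zero_add])
  exact (subsingleton_ext_succ_iff_abelianExt ℤ 0 M W').2 ext_W'
end

section
/- For any ring R and R-module M with n ≥ 1, fd_R(M) ≤ n if and only if Ext^{n+1}_R(M,C)=0 for every cotorsion R-module C. -/
open CategoryTheory

variable (R : Type) [Ring R]

/-- `C` is cotorsion: `Ext^1_R(F, C) = 0` for every flat module `F`. -/
def Cotorsion (C : ModuleCat.{0} R) : Prop :=
  ∀ F : ModuleCat.{0} R, IsFlatMod R F → extVanish R 1 F C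

/-!
For a right ideal `I`, write `(R ⧸ I)⁺ = Hom_ℤ(R ⧸ I, ℚ/ℤ)`. Let `0 → K → P → M → 0` be exact
with `P` projective. By the tensor-hom adjunction, and because `ℚ/ℤ` is an injective cogenerator,
`Ext¹(M, (R ⧸ I)⁺) = 0` means that `(R ⧸ I) ⊗ K → (R ⧸ I) ⊗ P` is injective. If `M` is flat then
`K → P` is pure, so this injectivity holds for every `I` and each `(R ⧸ I)⁺` is cotorsion.
Conversely, if it holds for every `I`, then the equational criterion passes from `P` to `M`. Hence
`M` is flat if and only if `Ext¹(M, C) = 0` for every cotorsion `C`.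

A pure submodule of a flat module is flat, so the syzygies of a flat module are flat and
`Extⁿ(F, C) = 0` for all flat `F`, cotorsion `C` and `n ≥ 1`. Long exact sequences therefore shift
dimension along flat resolutions, and the general case follows by induction on the dimension.
-/

section Ext

variable {k 𝒞 : Type*} [Ring k] [Category* 𝒞] [Abelian 𝒞]

theorem isZero_ext_succ_iff_forall_cocycle [Linear k 𝒞] [EnoughProjectives 𝒞] {X : 𝒞}
    (P : ProjectiveResolution X) (Y : 𝒞) (n : ℕ) :
    Limits.IsZero (((Ext k 𝒞 (n + 1)).obj (Opposite.op X)).obj Y) ↔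
      ∀ f : P.complex.X (n + 1) ⟶ Y, P.complex.d (n + 2) (n + 1) ≫ f = 0 →
        ∃ g : P.complex.X n ⟶ Y, P.complex.d (n + 1) n ≫ g = f := by
  rw [(P.isoExt (R := k) (n + 1) Y).isZero_iff, ← HomologicalComplex.exactAt_iff_isZero_homology,
    HomologicalComplex.exactAt_iff' _ n (n + 1) (n + 2) (by simp) (by simp),
    ShortComplex.moduleCat_exact_iff]
  rfl

theorem subsingleton_abelianExt_succ_iff_forall_cocycle [HasExt 𝒞] {X : 𝒞}
    (P : ProjectiveResolution X) (Y : 𝒞) (n : ℕ) :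
    Subsingleton (Abelian.Ext X Y (n + 1)) ↔
      ∀ f : P.complex.X (n + 1) ⟶ Y, P.complex.d (n + 2) (n + 1) ≫ f = 0 →
        ∃ g : P.complex.X n ⟶ Y, P.complex.d (n + 1) n ≫ g = f := by
  constructor
  · intro _ f hf
    rw [← P.extMk_eq_zero_iff f (n + 2) rfl hf n rfl]
    exact Subsingleton.elim _ _
  · intro h
    refine subsingleton_of_forall_eq 0 fun α => ?_
    obtain ⟨f, hf, rfl⟩ := P.extMk_surjective α (n + 2) rfl
    exact (P.extMk_eq_zero_iff f (n + 2) rfl hf n rfl).2 (h f hf)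

variable [HasExt 𝒞] {S : ShortComplex 𝒞} {C : 𝒞}

theorem subsingleton_ext_X₃_succ_iff_subsingleton_ext_X₁ (hS : S.ShortExact) {n : ℕ}
    (h₂ : Subsingleton (Abelian.Ext S.X₂ C n)) (h₂' : Subsingleton (Abelian.Ext S.X₂ C (n + 1))) :
    Subsingleton (Abelian.Ext S.X₃ C (n + 1)) ↔ Subsingleton (Abelian.Ext S.X₁ C n) := by
  constructor <;> intro _ <;> refine subsingleton_of_forall_eq 0 fun x => ?_
  · obtain ⟨y, rfl⟩ := Abelian.Ext.contravariant_sequence_exact₁ hS C x (add_comm 1 n)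
      (Subsingleton.elim _ _)
    rw [Subsingleton.elim y 0, Abelian.Ext.comp_zero]
  · obtain ⟨y, rfl⟩ := Abelian.Ext.contravariant_sequence_exact₃ hS C x
      (Subsingleton.elim _ _) (add_comm 1 n)
    rw [Subsingleton.elim y 0, Abelian.Ext.comp_zero]

theorem subsingleton_ext_one_iff_forall_exists_extension (hS : S.ShortExact)
    (h₂ : Subsingleton (Abelian.Ext S.X₂ C 1)) :
    Subsingleton (Abelian.Ext S.X₃ C 1) ↔ ∀ u : S.X₁ ⟶ C, ∃ v : S.X₂ ⟶ C, S.f ≫ v = u := by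
  constructor
  · intro _ u
    obtain ⟨y, hy⟩ := Abelian.Ext.contravariant_sequence_exact₁ hS C (Abelian.Ext.mk₀ u)
      (add_zero 1) (Subsingleton.elim _ _)
    obtain ⟨v, rfl⟩ := (Abelian.Ext.mk₀_bijective _ _).2 y
    rw [Abelian.Ext.mk₀_comp_mk₀] at hy
    exact ⟨v, (Abelian.Ext.mk₀_bijective _ _).1 hy⟩
  · intro h
    refine subsingleton_of_forall_eq 0 fun x => ?_
    obtain ⟨y, rfl⟩ := Abelian.Ext.contravariant_sequence_exact₃ hS C x
      (Subsingleton.elim _ _) (add_zero 1)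
    obtain ⟨u, rfl⟩ := (Abelian.Ext.mk₀_bijective _ _).2 y
    obtain ⟨v, rfl⟩ := h u
    rw [← Abelian.Ext.mk₀_comp_mk₀, hS.extClass_comp_assoc]

end Ext

section Character

open MulOpposite

/-- The character module `N⁺ = Hom_ℤ(N, ℚ/ℤ)` of a right module `N`, as a left module through
`(a • c) n = c (n a)`. It is a synonym of `CharacterModule`, which already carries another action
when the ring is commutative. -/
def RightCharacterModule (N : Type*) [AddCommGroup N] : Type _ := CharacterModule N

namespace RightCharacterModule

variable {A N : Type*} [Ring A] [AddCommGroup N]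

instance : AddCommGroup (RightCharacterModule N) := inferInstanceAs (AddCommGroup (N →+ _))

instance : FunLike (RightCharacterModule N) N (AddCircle (1 : ℚ)) :=
  inferInstanceAs (FunLike (CharacterModule N) N _)

instance : AddMonoidHomClass (RightCharacterModule N) N (AddCircle (1 : ℚ)) :=
  inferInstanceAs (AddMonoidHomClass (CharacterModule N) N _)

@[ext]
theorem ext {c d : RightCharacterModule N} (h : ∀ x, c x = d x) : c = d := DFunLike.ext _ _ h

theorem add_apply (c d : RightCharacterModule N) (x : N) : (c + d) x = c x + d x := rfl

instance [Module Aᵐᵒᵖ N] : Module A (RightCharacterModule N) where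
  smul a c := AddMonoidHom.comp c (DistribSMul.toAddMonoidHom N (op a))
  one_smul c := ext fun x => congrArg c (one_smul Aᵐᵒᵖ x)
  mul_smul a b c := ext fun x => congrArg c (mul_smul (op b) (op a) x)
  smul_zero _ := rfl
  smul_add _ _ _ := rfl
  add_smul a b c := ext fun x => (congrArg c (add_smul (op a) (op b) x)).trans (map_add c _ _)
  zero_smul c := ext fun x => (congrArg c (zero_smul Aᵐᵒᵖ x)).trans (map_zero c)

theorem smul_apply [Module Aᵐᵒᵖ N] (a : A) (c : RightCharacterModule N) (x : N) :
    (a • c) x = c (op a • x) := rfl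

theorem smul_apply_mk_one {I : Submodule Aᵐᵒᵖ A} (a : A) (c : RightCharacterModule (A ⧸ I)) :
    (a • c) (Submodule.Quotient.mk 1) = c (Submodule.Quotient.mk a) := by
  rw [smul_apply, ← Submodule.Quotient.mk_smul, op_smul_eq_mul, one_mul]

end RightCharacterModule

variable {A : Type*} [Ring A] {I : Submodule Aᵐᵒᵖ A}

variable (I) in
/-- The additive subgroup `I L` of a left module `L`, for a right ideal `I` (encoded as an
`Aᵐᵒᵖ`-submodule of `A`). The quotient `L ⧸ I L` plays the role of `(A ⧸ I) ⊗_A L`, because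
Mathlib's tensor product requires a commutative ring. -/
def rightIdealSMul (L : Type*) [AddCommGroup L] [Module A L] : Submodule ℤ L :=
  I.restrictScalars ℤ • ⊤

variable {L P : Type*} [AddCommGroup L] [AddCommGroup P] [Module A L] [Module A P]

theorem smul_mem_rightIdealSMul {a : A} (ha : a ∈ I) (x : L) : a • x ∈ rightIdealSMul I L :=
  Submodule.smul_mem_smul ha Submodule.mem_top

theorem rightIdealSMul_le {Q : Submodule ℤ L} :
    rightIdealSMul I L ≤ Q ↔ ∀ a ∈ I, ∀ x : L, a • x ∈ Q := by
  simp [rightIdealSMul, Submodule.smul_le]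

theorem exists_eq_sum_of_mem_rightIdealSMul {x : L} (hx : x ∈ rightIdealSMul I L) :
    ∃ (m : ℕ) (r : Fin m → A) (l : Fin m → L), (∀ i, r i ∈ I) ∧ ∑ i, r i • l i = x := by
  refine Submodule.smul_induction_on hx (fun a ha x _ => ?_) ?_
  · exact ⟨1, fun _ => a, fun _ => x, fun _ => ha, by simp⟩
  · rintro _ _ ⟨m, r, l, hr, rfl⟩ ⟨n, s, k, hs, rfl⟩
    exact ⟨m + n, Fin.append r s, Fin.append l k, by simpa [Fin.forall_fin_add] using ⟨hr, hs⟩,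
      by simp [Fin.sum_univ_add]⟩

theorem mem_rightIdealSMul_span_range {ι : Type*} [Fintype ι] {r : ι → A} {x : L} :
    x ∈ rightIdealSMul (Submodule.span Aᵐᵒᵖ (Set.range r)) L ↔ ∃ l : ι → L, ∑ i, r i • l i = x := by
  constructor
  · intro hx
    refine Submodule.smul_induction_on hx (fun a ha x _ => ?_) ?_
    · obtain ⟨b, rfl⟩ := (Submodule.mem_span_range_iff_exists_fun Aᵐᵒᵖ).1 ha
      exact ⟨fun i => unop (b i) • x, by simp [Finset.sum_smul, ← mul_smul]⟩
    · rintro _ _ ⟨l, rfl⟩ ⟨k, rfl⟩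
      exact ⟨l + k, by simp [Finset.sum_add_distrib]⟩
  · rintro ⟨l, rfl⟩
    exact sum_mem fun i _ =>
      smul_mem_rightIdealSMul (Submodule.subset_span (Set.mem_range_self i)) _

/-- The map `L ⧸ I L → P ⧸ I P` induced by `f`, standing for `(A ⧸ I) ⊗_A f`. -/
def rightIdealQuotientMap (I : Submodule Aᵐᵒᵖ A) (f : L →ₗ[A] P) :
    L ⧸ rightIdealSMul I L →ₗ[ℤ] P ⧸ rightIdealSMul I P :=
  Submodule.mapQ _ _ (f.restrictScalars ℤ) <| rightIdealSMul_le.2 fun a ha x => by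
    simpa using smul_mem_rightIdealSMul ha (f x)

theorem injective_rightIdealQuotientMap_iff {f : L →ₗ[A] P} :
    Function.Injective (rightIdealQuotientMap I f) ↔
      ∀ x, f x ∈ rightIdealSMul I P → x ∈ rightIdealSMul I L := by
  rw [injective_iff_map_eq_zero, (Submodule.mkQ_surjective _).forall]
  simp only [rightIdealQuotientMap, Submodule.mapQ_apply, Submodule.mkQ_apply,
    Submodule.Quotient.mk_eq_zero, LinearMap.coe_restrictScalars]

/-- The character of `L ⧸ I L` obtained from `u : L → (A ⧸ I)⁺` by evaluation at the class of
`1`. -/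
def characterOfLinearMap (u : L →ₗ[A] RightCharacterModule (A ⧸ I)) :
    CharacterModule (L ⧸ rightIdealSMul I L) :=
  LinearMap.toAddMonoidHom <| (rightIdealSMul I L).liftQ
    (AddMonoidHom.toIntLinearMap
      { toFun x := u x (Submodule.Quotient.mk 1)
        map_zero' := by rw [map_zero]; rfl
        map_add' x y := by rw [map_add, RightCharacterModule.add_apply] }) <|
    rightIdealSMul_le.2 fun a ha x => by
      change u (a • x) (Submodule.Quotient.mk 1) = 0
      rw [map_smul, RightCharacterModule.smul_apply_mk_one,
        (Submodule.Quotient.mk_eq_zero I).2 ha, map_zero]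

theorem characterOfLinearMap_mk (u : L →ₗ[A] RightCharacterModule (A ⧸ I)) (x : L) :
    characterOfLinearMap u (Submodule.Quotient.mk x) = u x (Submodule.Quotient.mk 1) := rfl

/-- The character of `A ⧸ I` sending the class of `a` to the value of `χ` at the class of
`a • x`. -/
def characterOfOrbit (χ : CharacterModule (L ⧸ rightIdealSMul I L)) (x : L) :
    RightCharacterModule (A ⧸ I) :=
  QuotientAddGroup.lift I.toAddSubgroup
    (AddMonoidHom.comp χ
      ((rightIdealSMul I L).mkQ.toAddMonoidHom.comp ((smulAddHom A L).flip x))) fun a ha => by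
    change χ (Submodule.Quotient.mk (a • x)) = 0
    rw [(Submodule.Quotient.mk_eq_zero _).2 (smul_mem_rightIdealSMul ha x), map_zero]

theorem characterOfOrbit_mk (χ : CharacterModule (L ⧸ rightIdealSMul I L)) (x : L) (a : A) :
    characterOfOrbit χ x (Submodule.Quotient.mk a) = χ (Submodule.Quotient.mk (a • x)) := rfl

/-- The tensor-hom adjunction `Hom_A(L, (A ⧸ I)⁺) ≃ ((A ⧸ I) ⊗_A L)⁺`, with `L ⧸ I L` in place of
the tensor product. -/
def linearMapEquivCharacterModule :
    (L →ₗ[A] RightCharacterModule (A ⧸ I)) ≃ CharacterModule (L ⧸ rightIdealSMul I L) where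
  toFun := characterOfLinearMap
  invFun χ :=
    { toFun := characterOfOrbit χ
      map_add' x y := by
        ext q
        induction q using Submodule.Quotient.induction_on with | H a =>
        simp only [RightCharacterModule.add_apply, characterOfOrbit_mk, smul_add,
          Submodule.Quotient.mk_add, map_add]
      map_smul' b x := by
        ext q
        induction q using Submodule.Quotient.induction_on with | H a =>
        simp only [RingHom.id_apply, RightCharacterModule.smul_apply, characterOfOrbit_mk,
          ← Submodule.Quotient.mk_smul, op_smul_eq_mul, mul_smul] }
  left_inv u := by
    ext x q
    induction q using Submodule.Quotient.induction_on with | H a =>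
    simp only [LinearMap.coe_mk, AddHom.coe_mk, characterOfOrbit_mk, characterOfLinearMap_mk,
      map_smul, RightCharacterModule.smul_apply_mk_one]
  right_inv χ := by
    ext q
    induction q using Submodule.Quotient.induction_on with | H x =>
    simp only [characterOfLinearMap_mk, LinearMap.coe_mk, AddHom.coe_mk, characterOfOrbit_mk,
      one_smul]

theorem linearMapEquivCharacterModule_comp (f : L →ₗ[A] P)
    (v : P →ₗ[A] RightCharacterModule (A ⧸ I)) :
    linearMapEquivCharacterModule (v.comp f) =
      CharacterModule.dual (rightIdealQuotientMap I f) (linearMapEquivCharacterModule v) := by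
  ext q
  induction q using Submodule.Quotient.induction_on with | H x => rfl

theorem surjective_comp_right_iff_injective_rightIdealQuotientMap (f : L →ₗ[A] P) :
    Function.Surjective (fun v : P →ₗ[A] RightCharacterModule (A ⧸ I) => v.comp f) ↔
      Function.Injective (rightIdealQuotientMap I f) := by
  rw [← CharacterModule.dual_surjective_iff_injective,
    ← linearMapEquivCharacterModule.comp_surjective,
    ← linearMapEquivCharacterModule.surjective_comp]
  exact Iff.of_eq (congrArg _ (funext (linearMapEquivCharacterModule_comp f)))

end Character

section Flat

theorem sum_smul_sum_smul {A M ι κ : Type*} [Semiring A] [AddCommMonoid M] [Module A M] [Fintype ι]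
    [Fintype κ] (r : ι → A) (a : ι → κ → A) (y : κ → M) :
    ∑ i, r i • ∑ j, a i j • y j = ∑ j, (∑ i, r i * a i j) • y j := by
  simp_rw [Finset.smul_sum, Finset.sum_smul, mul_smul]
  exact Finset.sum_comm

variable {R} {M : Type} [AddCommGroup M] [Module R M]

theorem isFlatMod_of_free [Module.Free R M] : IsFlatMod R M := by
  classical
  intro ι _ r x hx
  let b := Module.Free.chooseBasis R M
  let s := Finset.univ.biUnion fun i => (b.repr (x i)).support
  refine ⟨s, inferInstance, fun i j => b.repr (x i) j, fun j => b j, fun i => ?_, fun j => ?_⟩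
  · have h : (b.repr (x i)).support ⊆ s :=
      Finset.subset_biUnion_of_mem (fun i => (b.repr (x i)).support) (Finset.mem_univ i)
    rw [Finset.sum_coe_sort s fun j => b.repr (x i) j • b j]
    conv_lhs => rw [← b.linearCombination_repr (x i)]
    exact Finsupp.sum_of_support_subset _ h _ (by simp)
  · simpa using congrArg (fun y => b.repr y j) hx

theorem IsFlatMod.exists_of_system (hM : IsFlatMod R M) {σ ι : Type} (s : Finset σ) [Fintype ι]
    (r : σ → ι → R) (x : ι → M) (h : ∀ k ∈ s, ∑ i, r k i • x i = 0) :
    ∃ (κ : Type) (_ : Fintype κ) (a : ι → κ → R) (y : κ → M),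
      (∀ i, x i = ∑ j, a i j • y j) ∧ ∀ k ∈ s, ∀ j, ∑ i, r k i * a i j = 0 := by
  classical
  induction s using Finset.induction_on with
  | empty => exact ⟨ι, inferInstance, fun i j => if i = j then 1 else 0, x, by simp, by simp⟩
  | insert k s hk ih =>
    obtain ⟨κ, _, a, y, hx, ha⟩ := ih fun l hl => h l (Finset.mem_insert_of_mem hl)
    have hy : ∑ j, (∑ i, r k i * a i j) • y j = 0 := by
      simp only [← sum_smul_sum_smul, ← hx, h k (Finset.mem_insert_self k s)]
    obtain ⟨μ, _, b, z, hyz, hb⟩ := hM κ inferInstance _ y hy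
    refine ⟨μ, inferInstance, fun i m => ∑ j, a i j * b j m, z, fun i => ?_, fun l hl m => ?_⟩
    · simp only [← sum_smul_sum_smul, ← hyz, hx i]
    · have hrab : ∑ i, r l i * ∑ j, a i j * b j m = ∑ j, (∑ i, r l i * a i j) * b j m :=
        sum_smul_sum_smul (r l) a fun j => b j m
      rw [hrab]
      rcases Finset.mem_insert.1 hl with rfl | hl
      · exact hb m
      · simp only [ha l hl, zero_mul, Finset.sum_const_zero]

variable {L P F : Type} [AddCommGroup L] [AddCommGroup P] [AddCommGroup F]
  [Module R L] [Module R P] [Module R F] {f : L →ₗ[R] P} {g : P →ₗ[R] F}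

/-- Purity of a submodule, for a linear map: every finite system of linear equations with constants
in `L` that has a solution in `P` has one in `L`. Systems without unknowns make `f` injective. -/
def IsPureMap (f : L →ₗ[R] P) : Prop :=
  ∀ (σ ι : Type) [Fintype σ] [Fintype ι] (r : σ → ι → R) (c : σ → L) (p : ι → P),
    (∀ k, f (c k) = ∑ i, r k i • p i) → ∃ l : ι → L, ∀ k, c k = ∑ i, r k i • l i

theorem IsFlatMod.isPureMap (hF : IsFlatMod R F) (hf : Function.Injective f)
    (hg : Function.Surjective g) (hfg : Function.Exact f g) : IsPureMap f := by
  intro σ ι _ _ r c p hp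
  obtain ⟨κ, _, a, y, hy, ha⟩ := hF.exists_of_system Finset.univ r (fun i => g (p i)) fun k _ => by
    simp only [← map_smul, ← map_sum, ← hp, hfg.apply_apply_eq_zero]
  choose w hw using fun j => hg (y j)
  have hl : ∀ i, ∃ l, f l = p i - ∑ j, a i j • w j := fun i =>
    (hfg _).1 (by simp only [map_sub, map_sum, map_smul, hw, hy i, sub_self])
  choose l hl using hl
  have hrw : ∀ k, ∑ i, r k i • ∑ j, a i j • w j = 0 := fun k => by
    simp only [sum_smul_sum_smul, ha k (Finset.mem_univ k), zero_smul, Finset.sum_const_zero]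
  refine ⟨l, fun k => hf ?_⟩
  simp only [hp, map_sum, map_smul, hl, smul_sub, Finset.sum_sub_distrib, hrw, sub_zero]

theorem IsPureMap.isFlatMod (hf : IsPureMap f) (hP : IsFlatMod R P) : IsFlatMod R L := by
  intro ι _ r x hx
  obtain ⟨κ, _, a, y, hy, ha⟩ := hP ι inferInstance r (fun i => f (x i)) <| by
    simp only [← map_smul, ← map_sum, hx, map_zero]
  obtain ⟨l, hl⟩ := hf ι κ a x y hy
  exact ⟨κ, inferInstance, a, l, hl, ha⟩

theorem IsPureMap.injective_rightIdealQuotientMap (hf : IsPureMap f) (I : Submodule Rᵐᵒᵖ R) :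
    Function.Injective (rightIdealQuotientMap I f) := by
  refine injective_rightIdealQuotientMap_iff.2 fun x hx => ?_
  obtain ⟨m, r, p, hr, hp⟩ := exists_eq_sum_of_mem_rightIdealSMul hx
  obtain ⟨l, hl⟩ := hf Unit (Fin m) (fun _ => r) (fun _ => x) p fun _ => hp.symm
  rw [hl ()]
  exact sum_mem fun i _ => smul_mem_rightIdealSMul (hr i) (l i)

theorem IsFlatMod.of_forall_injective_rightIdealQuotientMap (hP : IsFlatMod R P)
    (hg : Function.Surjective g) (hfg : Function.Exact f g)
    (h : ∀ I : Submodule Rᵐᵒᵖ R, Function.Injective (rightIdealQuotientMap I f)) :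
    IsFlatMod R F := by
  intro ι _ r x hx
  choose p hp using fun i => hg (x i)
  obtain ⟨l, hl⟩ := (hfg (∑ i, r i • p i)).1 (by simp only [map_sum, map_smul, hp, hx])
  have hlr : l ∈ rightIdealSMul (Submodule.span Rᵐᵒᵖ (Set.range r)) L :=
    injective_rightIdealQuotientMap_iff.1 (h _) l (mem_rightIdealSMul_span_range.2 ⟨p, hl.symm⟩)
  obtain ⟨k, rfl⟩ := mem_rightIdealSMul_span_range.1 hlr
  obtain ⟨κ, _, a, y, hy, ha⟩ := hP ι inferInstance r (fun i => p i - f (k i)) <| by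
    simp only [smul_sub, Finset.sum_sub_distrib, ← hl, map_sum, map_smul, sub_self]
  refine ⟨κ, inferInstance, a, fun j => g (y j), fun i => ?_, ha⟩
  simpa only [map_sub, hp, hfg.apply_apply_eq_zero, sub_zero, map_sum, map_smul] using
    congrArg g (hy i)

end Flat

section Cotorsion

variable {R}

theorem extVanish_succ_iff {n : ℕ} {M N : ModuleCat.{0} R} :
    extVanish R (n + 1) M N ↔ Subsingleton (Abelian.Ext.{0} M N (n + 1)) := by
  rw [extVanish, ← ModuleCat.isZero_iff_subsingleton,
    isZero_ext_succ_iff_forall_cocycle (projectiveResolution M),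
    subsingleton_abelianExt_succ_iff_forall_cocycle (projectiveResolution M)]

variable {M C : ModuleCat.{0} R} {S : ShortComplex (ModuleCat.{0} R)} {I : Submodule Rᵐᵒᵖ R}

theorem function_exact_of_shortExact (hS : S.ShortExact) : Function.Exact S.f.hom S.g.hom :=
  (ShortComplex.ShortExact.moduleCat_exact_iff_function_exact S).1 hS.exact

theorem isPureMap_of_shortExact (hS : S.ShortExact) (h₃ : IsFlatMod R S.X₃) :
    IsPureMap S.f.hom :=
  h₃.isPureMap hS.moduleCat_injective_f hS.moduleCat_surjective_g (function_exact_of_shortExact hS)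

theorem extVanish_one_rightCharacterModule_iff (hS : S.ShortExact) [Projective S.X₂] :
    extVanish R 1 S.X₃ (ModuleCat.of R (RightCharacterModule (R ⧸ I))) ↔
      Function.Injective (rightIdealQuotientMap I S.f.hom) := by
  rw [extVanish_succ_iff, subsingleton_ext_one_iff_forall_exists_extension hS
    (Abelian.Ext.subsingleton_of_projective _ _ 0),
    ← surjective_comp_right_iff_injective_rightIdealQuotientMap]
  exact ⟨fun h u => (h (ModuleCat.ofHom u)).imp' ModuleCat.Hom.hom fun v hv =>
      congrArg ModuleCat.Hom.hom hv,
    fun h u => (h u.hom).imp' ModuleCat.ofHom fun v hv => ModuleCat.hom_ext hv⟩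

theorem cotorsion_rightCharacterModule :
    Cotorsion R (ModuleCat.of R (RightCharacterModule (R ⧸ I))) := fun F hF =>
  have hS := F.shortExact_projectiveShortComplex
  (extVanish_one_rightCharacterModule_iff hS).2
    ((isPureMap_of_shortExact hS hF).injective_rightIdealQuotientMap I)

theorem isFlatMod_of_forall_cotorsion
    (h : ∀ C : ModuleCat.{0} R, Cotorsion R C → extVanish R 1 M C) : IsFlatMod R M :=
  have hS := M.shortExact_projectiveShortComplex
  (isFlatMod_of_free (M := M.projectiveShortComplex.X₂)).of_forall_injective_rightIdealQuotientMap
    hS.moduleCat_surjective_g (function_exact_of_shortExact hS) fun _ =>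
      (extVanish_one_rightCharacterModule_iff hS).1 (h _ cotorsion_rightCharacterModule)

theorem Cotorsion.extVanish_of_isFlatMod (hC : Cotorsion R C) (hM : IsFlatMod R M) (n : ℕ) :
    extVanish R (n + 1) M C := by
  induction n generalizing M with
  | zero => exact hC M hM
  | succ n ih =>
    have hS := M.shortExact_projectiveShortComplex
    have hK : IsFlatMod R M.projectiveShortComplex.X₁ :=
      (isPureMap_of_shortExact hS hM).isFlatMod isFlatMod_of_free
    rw [extVanish_succ_iff]
    exact (subsingleton_ext_X₃_succ_iff_subsingleton_ext_X₁ hS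
      (Abelian.Ext.subsingleton_of_projective _ _ n)
      (Abelian.Ext.subsingleton_of_projective _ _ (n + 1))).2 (extVanish_succ_iff.1 (ih hK))

theorem Cotorsion.extVanish_X₃_iff_extVanish_X₁ (hC : Cotorsion R C) (hS : S.ShortExact)
    (h₂ : IsFlatMod R S.X₂) (n : ℕ) :
    extVanish R (n + 2) S.X₃ C ↔ extVanish R (n + 1) S.X₁ C := by
  rw [extVanish_succ_iff, extVanish_succ_iff]
  exact subsingleton_ext_X₃_succ_iff_subsingleton_ext_X₁ hS
    (extVanish_succ_iff.1 (hC.extVanish_of_isFlatMod h₂ n))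
    (extVanish_succ_iff.1 (hC.extVanish_of_isFlatMod h₂ (n + 1)))

theorem fdLE_succ_iff {n : ℕ} :
    fdLE R (n + 1) M ↔ ∃ (K F : ModuleCat.{0} R) (f : K ⟶ F) (g : F ⟶ M) (w : f ≫ g = 0),
      (ShortComplex.mk f g w).ShortExact ∧ IsFlatMod R F ∧ fdLE R n K := by
  constructor
  · rintro ⟨K, F, f, g, hF, hf, hg, hfg, hK⟩
    exact ⟨K, F, f, g, ModuleCat.hom_ext (LinearMap.ext hfg.apply_apply_eq_zero),
      ModuleCat.shortComplex_shortExact _ hfg hf hg, hF, hK⟩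
  · rintro ⟨K, F, f, g, w, hS, hF, hK⟩
    exact ⟨K, F, f, g, hF, hS.moduleCat_injective_f, hS.moduleCat_surjective_g,
      function_exact_of_shortExact hS, hK⟩

theorem Cotorsion.extVanish_of_fdLE (hC : Cotorsion R C) {n : ℕ} (hM : fdLE R n M) :
    extVanish R (n + 1) M C := by
  induction n generalizing M with
  | zero => exact hC M hM
  | succ n ih =>
    obtain ⟨K, F, f, g, w, hS, hF, hK⟩ := fdLE_succ_iff.1 hM
    exact (hC.extVanish_X₃_iff_extVanish_X₁ hS hF n).2 (ih hK)

theorem fdLE_of_forall_cotorsion {n : ℕ}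
    (h : ∀ C : ModuleCat.{0} R, Cotorsion R C → extVanish R (n + 1) M C) : fdLE R n M := by
  induction n generalizing M with
  | zero => exact isFlatMod_of_forall_cotorsion h
  | succ n ih =>
    have hS := M.shortExact_projectiveShortComplex
    have hF : IsFlatMod R M.projectiveShortComplex.X₂ := isFlatMod_of_free
    exact fdLE_succ_iff.2 ⟨_, _, _, _, M.projectiveShortComplex.zero, hS, hF, ih fun C hC =>
      (hC.extVanish_X₃_iff_extVanish_X₁ hS hF n).1 (h C hC)⟩

end Cotorsion

/-- For `n ≥ 1`, `fd_R M ≤ n` iff `Ext^{n+1}_R(M, C) = 0` for every cotorsion module `C`. -/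
theorem stmt8 (n : ℕ) (hn : 1 ≤ n) (M : ModuleCat.{0} R) :
    fdLE R n M ↔ ∀ C : ModuleCat.{0} R, Cotorsion R C → extVanish R (n + 1) M C :=
  ⟨fun hM _ hC => hC.extVanish_of_fdLE hM, fdLE_of_forall_cotorsion⟩
end

section
/- Every cotorsion R-module is L_n-injective for some (equivalently, every) n ≥ 1 if and only if l.FFD(R)=0, i.e. every R-module of finite flat dimension is flat. -/
/-!
A module `M` is flat if and only if `Ext¹(M, C) = 0` for every cotorsion module `C`. Only "if" has
content, and it needs just enough cotorsion modules: for a finitely generated right ideal `I`, take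
the character module `(R/I)⁺ = Hom_ℤ(R/I, ℚ/ℤ)`. For `0 → K → P → M → 0` with `P` free,
`Ext¹(M, (R/I)⁺)` vanishes iff `Hom_R(P, (R/I)⁺) → Hom_R(K, (R/I)⁺)` is surjective; by Hom-tensor
adjunction this map is the character dual of `K/IK → P/IP`, so it is surjective iff
`K/IK → P/IP` is injective, and this holds for all `I` iff `M` is flat.

Hence all cotorsion modules are `L_n`-injective iff all modules of flat dimension at most `n` are
flat, and the case `n = 1` already yields, by dimension shifting, all finite flat dimensions.
-/

open CategoryTheory

variable (R : Type) [Ring R]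

section Ext

variable {R}

theorem exists_comp_eq_of_ker_le_ker {A B C : Type*} [AddCommGroup A] [Module R A]
    [AddCommGroup B] [Module R B] [AddCommGroup C] [Module R C] {e : A →ₗ[R] B}
    (he : Function.Surjective e) {f : A →ₗ[R] C} (hf : LinearMap.ker e ≤ LinearMap.ker f) :
    ∃ g : B →ₗ[R] C, g ∘ₗ e = f := by
  refine ⟨(LinearMap.ker e).liftQ f hf ∘ₗ (e.quotKerEquivOfSurjective he).symm, ?_⟩
  ext a
  have ha : (e.quotKerEquivOfSurjective he).symm (e a) = Submodule.Quotient.mk a :=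
    (LinearEquiv.symm_apply_eq _).2 rfl
  simp [ha]

theorem surjective_domRestrict_range_iff {X₀ X₁ X₂ C : Type*} [AddCommGroup X₀] [Module R X₀]
    [AddCommGroup X₁] [Module R X₁] [AddCommGroup X₂] [Module R X₂] [AddCommGroup C] [Module R C]
    {d₂ : X₂ →ₗ[R] X₁} {d₁ : X₁ →ₗ[R] X₀} (hd : Function.Exact d₂ d₁) :
    (Function.Surjective fun g : X₀ →ₗ[R] C ↦ g.domRestrict (LinearMap.range d₁)) ↔
      ∀ f : X₁ →ₗ[R] C, f ∘ₗ d₂ = 0 → ∃ g : X₀ →ₗ[R] C, g ∘ₗ d₁ = f := by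
  constructor
  · intro h f hf
    obtain ⟨f', hf'⟩ := exists_comp_eq_of_ker_le_ker (f := f) d₁.surjective_rangeRestrict (by
      rw [LinearMap.ker_rangeRestrict, hd.linearMap_ker_eq]
      exact LinearMap.range_le_ker_iff.2 hf)
    obtain ⟨g, hg⟩ := h f'
    exact ⟨g, by rw [← hf', ← hg]; rfl⟩
  · intro h f
    obtain ⟨g, hg⟩ := h (f ∘ₗ d₁.rangeRestrict) <| LinearMap.ext fun x ↦ by
      have hx : d₁.rangeRestrict (d₂ x) = 0 := Subtype.ext (hd.apply_apply_eq_zero x)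
      simp [hx]
    refine ⟨g, LinearMap.ext fun y ↦ ?_⟩
    obtain ⟨x, rfl⟩ := d₁.surjective_rangeRestrict y
    exact LinearMap.congr_fun hg x

theorem extVanish_one_iff_forall_exists_comp_d_eq {M : ModuleCat.{0} R}
    (P : ProjectiveResolution M) (C : ModuleCat.{0} R) :
    extVanish R 1 M C ↔ ∀ f : P.complex.X 1 →ₗ[R] C, f ∘ₗ (P.complex.d 2 1).hom = 0 →
      ∃ g : P.complex.X 0 →ₗ[R] C, g ∘ₗ (P.complex.d 1 0).hom = f := by
  have hExact : extVanish R 1 M C ↔ (P.complex.linearYonedaObj ℤ C).ExactAt 1 := by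
    rw [HomologicalComplex.exactAt_iff_isZero_homology, ← (P.isoExt (R := ℤ) 1 C).isZero_iff,
      ModuleCat.isZero_iff_subsingleton]
    rfl
  have hHom : extVanish R 1 M C ↔ ∀ f : P.complex.X 1 ⟶ C, P.complex.d 2 1 ≫ f = 0 →
      ∃ g : P.complex.X 0 ⟶ C, P.complex.d 1 0 ≫ g = f := by
    rw [hExact, HomologicalComplex.exactAt_iff' _ 0 1 2 (by simp) (by simp),
      ShortComplex.moduleCat_exact_iff]
    rfl
  simp only [hHom, (ModuleCat.homEquiv (R := R)).forall_congr_left,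
    (ModuleCat.homEquiv (R := R)).exists_congr_left, ModuleCat.hom_ext_iff]
  rfl

theorem extVanish_one_iff_of_projectiveResolution {M : ModuleCat.{0} R}
    (P : ProjectiveResolution M) (C : ModuleCat.{0} R) :
    extVanish R 1 M C ↔ Function.Surjective fun g : P.complex.X 0 →ₗ[R] C ↦
      g.domRestrict (LinearMap.ker (P.π.f 0).hom) := by
  have hker : LinearMap.range (P.complex.d 1 0).hom = LinearMap.ker (P.π.f 0).hom :=
    (ShortComplex.moduleCat_exact_iff_range_eq_ker _).1 P.exact₀
  have hd : Function.Exact (P.complex.d 2 1).hom (P.complex.d 1 0).hom :=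
    (ShortComplex.ShortExact.moduleCat_exact_iff_function_exact _).1 (P.exact_succ 0)
  rw [extVanish_one_iff_forall_exists_comp_d_eq, ← hker, surjective_domRestrict_range_iff hd]

theorem surjective_domRestrict_ker_of_projective {P Q M C : Type*} [AddCommGroup P] [Module R P]
    [AddCommGroup Q] [Module R Q] [AddCommGroup M] [Module R M] [AddCommGroup C] [Module R C]
    [Module.Projective R P] [Module.Projective R Q] {π : P →ₗ[R] M} {ρ : Q →ₗ[R] M}
    (hπ : Function.Surjective π) (hρ : Function.Surjective ρ)
    (h : Function.Surjective fun g : P →ₗ[R] C ↦ g.domRestrict (LinearMap.ker π)) :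
    Function.Surjective fun g : Q →ₗ[R] C ↦ g.domRestrict (LinearMap.ker ρ) := by
  intro f
  obtain ⟨u, hu⟩ := Module.projective_lifting_property π ρ hπ
  obtain ⟨v, hv⟩ := Module.projective_lifting_property ρ π hρ
  have hu_apply (q : Q) : π (u q) = ρ q := LinearMap.congr_fun hu q
  have hv_apply (p : P) : ρ (v p) = π p := LinearMap.congr_fun hv p
  let v' : LinearMap.ker π →ₗ[R] LinearMap.ker ρ := v.restrict fun p hp ↦ by
    rwa [LinearMap.mem_ker, hv_apply]
  let w : Q →ₗ[R] LinearMap.ker ρ := (LinearMap.id - v ∘ₗ u).codRestrict _ fun q ↦ by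
    simp [hu_apply, hv_apply]
  obtain ⟨g, hg⟩ := h (f ∘ₗ v')
  -- On `ker ρ` the identity is `v ∘ u + w`, and `w` is defined on all of `Q`.
  refine ⟨g ∘ₗ u + f ∘ₗ w, LinearMap.ext fun k ↦ ?_⟩
  have huk : u k ∈ LinearMap.ker π := by rw [LinearMap.mem_ker, hu_apply, k.2]
  have hguk : g (u k) = f (v' ⟨u k, huk⟩) := LinearMap.congr_fun hg ⟨u k, huk⟩
  have hk : v' ⟨u k, huk⟩ + w k = k := Subtype.ext (by simp [v', w])
  calc g (u k) + f (w k) = f (v' ⟨u k, huk⟩ + w k) := by rw [hguk, map_add]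
    _ = f k := by rw [hk]

theorem extVanish_one_iff_surjective_domRestrict_ker {P : Type*} [AddCommGroup P] [Module R P]
    [Module.Projective R P] {M : ModuleCat.{0} R} {π : P →ₗ[R] M} (hπ : Function.Surjective π)
    (C : ModuleCat.{0} R) :
    extVanish R 1 M C ↔
      Function.Surjective fun g : P →ₗ[R] C ↦ g.domRestrict (LinearMap.ker π) := by
  let Q := projectiveResolution M
  let ρ : Q.complex.X 0 →ₗ[R] M := (Q.π.f 0).hom
  have hρ : Function.Surjective ρ :=
    (ModuleCat.epi_iff_surjective (Q.π.f 0)).1 inferInstance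
  have : Module.Projective R (Q.complex.X 0) :=
    (IsProjective.iff_projective _).2 (Q.projective 0)
  rw [extVanish_one_iff_of_projectiveResolution Q]
  exact ⟨surjective_domRestrict_ker_of_projective hρ hπ,
    surjective_domRestrict_ker_of_projective hπ hρ⟩

end Ext

section RowQuotient

variable {R} {ι : Type*} [Fintype ι] (r : ι → R)
  {A B : Type*} [AddCommGroup A] [Module R A] [AddCommGroup B] [Module R B]

variable (A) in
/-- The additive map `x ↦ ∑ rᵢ xᵢ` on tuples of elements of a left module `A`. Its range is `IA`,
where `I = ∑ rᵢR` is the right ideal generated by the row `r`. -/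
def rowSum : (ι → A) →+ A where
  toFun x := ∑ i, r i • x i
  map_zero' := by simp
  map_add' x y := by simp [Finset.sum_add_distrib]

theorem rowSum_apply (x : ι → A) : rowSum r A x = ∑ i, r i • x i := rfl

theorem map_rowSum (f : A →ₗ[R] B) (x : ι → A) : f (rowSum r A x) = rowSum r B (f ∘ x) := by
  simp [rowSum_apply]

variable (A) in
/-- The quotient `A/IA` for the right ideal `I = ∑ rᵢR`. It stands for `R/I ⊗_R A`, which is not
available as a tensor product over a noncommutative ring. -/
abbrev RowQuotient : Type _ := A ⧸ (rowSum r A).range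

/-- The map `A/IA → B/IB` induced by a linear map `A → B`. -/
def RowQuotient.map (f : A →ₗ[R] B) : RowQuotient r A →ₗ[ℤ] RowQuotient r B :=
  AddMonoidHom.toIntLinearMap <| QuotientAddGroup.map _ _ f.toAddMonoidHom <| by
    rintro _ ⟨x, rfl⟩
    exact ⟨f ∘ x, (map_rowSum r f x).symm⟩

@[simp]
theorem RowQuotient.map_mk (f : A →ₗ[R] B) (a : A) :
    RowQuotient.map r f (a : RowQuotient r A) = (f a : RowQuotient r B) := rfl

theorem RowQuotient.map_subtype_injective_iff (K : Submodule R A) :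
    Function.Injective (RowQuotient.map r K.subtype) ↔
      ∀ k : K, (k : A) ∈ (rowSum r A).range → k ∈ (rowSum r K).range := by
  rw [injective_iff_map_eq_zero, QuotientAddGroup.forall_mk]
  simp only [RowQuotient.map_mk, QuotientAddGroup.eq_zero_iff, Submodule.subtype_apply]

end RowQuotient

section Flat

variable {R}

theorem IsFlatMod.finsupp (X : Type) : IsFlatMod R (X →₀ R) := by
  classical
  intro ι _ r x hx
  let s : Finset X := Finset.univ.biUnion fun i ↦ (x i).support
  have hs (i : ι) : (x i).support ⊆ s :=
    Finset.subset_biUnion_of_mem (fun i ↦ (x i).support) (Finset.mem_univ i)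
  refine ⟨s, inferInstance, fun i j ↦ x i j, fun j ↦ Finsupp.single (j : X) 1, fun i ↦ ?_,
    fun j ↦ ?_⟩
  · calc x i = (x i).sum Finsupp.single := (Finsupp.sum_single (x i)).symm
      _ = ∑ j ∈ s, Finsupp.single j (x i j) :=
        Finsupp.sum_of_support_subset _ (hs i) _ fun _ _ ↦ Finsupp.single_zero _
      _ = ∑ j : s, Finsupp.single (j : X) (x i j) := (Finset.sum_coe_sort s _).symm
      _ = ∑ j : s, x i j • Finsupp.single (j : X) 1 := by
        simp only [Finsupp.smul_single, smul_eq_mul, mul_one]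
  · simpa using DFunLike.congr_fun hx (j : X)

theorem IsFlatMod.of_subsingleton (A : Type) [AddCommGroup A] [Module R A] [Subsingleton A] :
    IsFlatMod R A := fun _ _ _ _ _ ↦
  ⟨PEmpty, inferInstance, fun _ ↦ PEmpty.elim, PEmpty.elim, fun _ ↦ Subsingleton.elim _ _,
    fun j ↦ j.elim⟩

theorem rowSum_sum_smul_eq_zero {ι κ A : Type*} [Fintype ι] [Fintype κ] [AddCommGroup A]
    [Module R A] {r : ι → R} {a : ι → κ → R} (h : ∀ j, ∑ i, r i * a i j = 0) (y : κ → A) :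
    rowSum r A (fun i ↦ ∑ j, a i j • y j) = 0 := by
  simp only [rowSum_apply, Finset.smul_sum, ← mul_smul]
  rw [Finset.sum_comm]
  simp only [← Finset.sum_smul, h, zero_smul, Finset.sum_const_zero]

variable {P M : Type} [AddCommGroup P] [Module R P] [AddCommGroup M] [Module R M]
  {π : P →ₗ[R] M}

theorem IsFlatMod.map_ker_subtype_injective (hM : IsFlatMod R M) (hπ : Function.Surjective π)
    {ι : Type} [Fintype ι] (r : ι → R) :
    Function.Injective (RowQuotient.map r (LinearMap.ker π).subtype) := by
  rw [RowQuotient.map_subtype_injective_iff]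
  rintro ⟨_, hk⟩ ⟨p, rfl⟩
  obtain ⟨κ, _, a, y, hy, ha⟩ := hM ι ‹_› r (π ∘ p) (by
    rwa [← rowSum_apply, ← map_rowSum])
  choose z hz using fun j ↦ hπ (y j)
  have hker (i : ι) : p i - ∑ j, a i j • z j ∈ LinearMap.ker π := by
    simp [hz, ← hy]
  refine ⟨fun i ↦ ⟨_, hker i⟩, Subtype.ext ?_⟩
  calc (LinearMap.ker π).subtype (rowSum r _ fun i ↦ ⟨_, hker i⟩)
      = rowSum r P (p - fun i ↦ ∑ j, a i j • z j) := map_rowSum r _ _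
    _ = rowSum r P p := by rw [map_sub, rowSum_sum_smul_eq_zero ha, sub_zero]

theorem IsFlatMod.of_map_ker_subtype_injective (hP : IsFlatMod R P) (hπ : Function.Surjective π)
    (h : ∀ (ι : Type) [Fintype ι] (r : ι → R),
      Function.Injective (RowQuotient.map r (LinearMap.ker π).subtype)) :
    IsFlatMod R M := by
  intro ι _ r x hx
  choose p hp using fun i ↦ hπ (x i)
  have hker : rowSum r P p ∈ LinearMap.ker π := by
    rw [LinearMap.mem_ker, map_rowSum, ← hx]
    simp [rowSum_apply, hp]
  obtain ⟨k, hk⟩ := (RowQuotient.map_subtype_injective_iff r _).1 (h ι r) ⟨_, hker⟩ ⟨p, rfl⟩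
  have hpk : rowSum r P (p - (LinearMap.ker π).subtype ∘ k) = 0 := by
    rw [map_sub, ← map_rowSum, hk, Submodule.subtype_apply, sub_self]
  rw [rowSum_apply] at hpk
  obtain ⟨κ, hκ, a, y, hy, ha⟩ := hP ι ‹_› r _ hpk
  refine ⟨κ, hκ, a, π ∘ y, fun i ↦ ?_, ha⟩
  calc x i = π (p i - k i) := by rw [map_sub, hp, (k i).2, sub_zero]
    _ = π (∑ j, a i j • y j) := congrArg π (hy i)
    _ = ∑ j, a i j • π (y j) := by simp only [map_sum, map_smul]

theorem isFlatMod_iff_forall_map_ker_subtype_injective (hP : IsFlatMod R P)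
    (hπ : Function.Surjective π) :
    IsFlatMod R M ↔ ∀ (ι : Type) [Fintype ι] (r : ι → R),
      Function.Injective (RowQuotient.map r (LinearMap.ker π).subtype) :=
  ⟨fun hM _ _ r ↦ hM.map_ker_subtype_injective hπ r, hP.of_map_ker_subtype_injective hπ⟩

end Flat

section RowDual

variable {R} {ι : Type*} [Fintype ι] (r : ι → R)
  {A B : Type*} [AddCommGroup A] [Module R A] [AddCommGroup B] [Module R B]

/-- The character module `(R/I)⁺ = Hom_ℤ(R/I, ℚ/ℤ)` of the right module `R/I`, where `I = ∑ rᵢR`.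
It is a left `R`-module through the right action of `R` on `R/I`. -/
abbrev RowDual : Type := CharacterModule (RowQuotient r R)

instance : SMul R (RowDual r) where
  smul s φ := CharacterModule.dual (RowQuotient.map r (LinearMap.toSpanSingleton R R s)) φ

namespace RowDual

variable {r}

@[ext]
theorem ext {φ ψ : RowDual r} (h : ∀ t : R, φ (t : RowQuotient r R) = ψ (t : RowQuotient r R)) :
    φ = ψ :=
  DFunLike.ext _ _ (QuotientAddGroup.forall_mk.2 h)

theorem add_apply (φ ψ : RowDual r) (x : RowQuotient r R) : (φ + ψ) x = φ x + ψ x := rfl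

theorem smul_apply_mk (s t : R) (φ : RowDual r) :
    (s • φ) (t : RowQuotient r R) = φ ((t * s : R) : RowQuotient r R) := rfl

instance : Module R (RowDual r) where
  one_smul φ := by ext t; rw [smul_apply_mk, mul_one]
  mul_smul s s' φ := by ext t; simp only [smul_apply_mk, mul_assoc]
  smul_zero s := rfl
  smul_add s φ ψ := rfl
  add_smul s s' φ := by
    ext t
    simp only [add_apply, smul_apply_mk, mul_add, QuotientAddGroup.mk_add, map_add]
  zero_smul φ := by
    ext t
    rw [smul_apply_mk, mul_zero]
    exact map_zero φ

variable (r) in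
/-- Evaluation of a character of `R/I` at the class of `1`. -/
def evalOne : RowDual r →+ AddCircle (1 : ℚ) :=
  AddMonoidHom.eval ((1 : R) : RowQuotient r R)

theorem evalOne_smul (t : R) (φ : RowDual r) : evalOne r (t • φ) = φ (t : RowQuotient r R) := by
  change φ ((1 * t : R) : RowQuotient r R) = _
  rw [one_mul]

theorem evalOne_rowSum (φ : ι → RowDual r) : evalOne r (rowSum r (RowDual r) φ) = 0 := by
  classical
  have hrow (i : ι) : ((r i : R) : RowQuotient r R) = 0 :=
    (QuotientAddGroup.eq_zero_iff _).2 ⟨Pi.single i 1, by simp [rowSum_apply, Pi.single_apply]⟩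
  simp only [rowSum_apply, map_sum, evalOne_smul, hrow, map_zero, Finset.sum_const_zero]

/-- Hom-tensor adjunction `Hom_R(A, (R/I)⁺) ≃ (A/IA)⁺`, where `A/IA` plays the role of
`R/I ⊗_R A`. -/
def homEquiv : (A →ₗ[R] RowDual r) ≃ CharacterModule (RowQuotient r A) where
  toFun f := QuotientAddGroup.lift _ ((evalOne r).comp f.toAddMonoidHom) <| by
    rintro _ ⟨x, rfl⟩
    exact (congrArg (evalOne r) (map_rowSum r f x)).trans (evalOne_rowSum _)
  invFun ψ :=
    { toFun := fun a ↦ CharacterModule.dual (RowQuotient.map r (LinearMap.toSpanSingleton R A a)) ψ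
      map_add' := fun a b ↦ by
        ext t
        rw [add_apply]
        exact (congrArg (fun c : A ↦ ψ (c : RowQuotient r A)) (smul_add t a b)).trans
          (map_add ψ ((t • a : A) : RowQuotient r A) ((t • b : A) : RowQuotient r A))
      map_smul' := fun s a ↦ by
        ext t
        exact congrArg (fun c : A ↦ ψ (c : RowQuotient r A)) (mul_smul t s a).symm }
  left_inv f := by
    ext a t
    exact (congrArg (evalOne r) (map_smul f t a)).trans (evalOne_smul t (f a))
  right_inv ψ := DFunLike.ext _ _ <| QuotientAddGroup.forall_mk.2 fun a ↦
    congrArg (fun c : A ↦ ψ (c : RowQuotient r A)) (one_smul R a)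

theorem homEquiv_comp (g : B →ₗ[R] RowDual r) (f : A →ₗ[R] B) :
    homEquiv (g ∘ₗ f) = CharacterModule.dual (RowQuotient.map r f) (homEquiv g) :=
  DFunLike.ext _ _ <| QuotientAddGroup.forall_mk.2 fun _ ↦ rfl

theorem surjective_comp_iff_injective_map (f : A →ₗ[R] B) :
    (Function.Surjective fun g : B →ₗ[R] RowDual r ↦ g ∘ₗ f) ↔
      Function.Injective (RowQuotient.map r f) := by
  have hconj : homEquiv ∘ (fun g : B →ₗ[R] RowDual r ↦ g ∘ₗ f) =
      CharacterModule.dual (RowQuotient.map r f) ∘ homEquiv :=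
    funext fun g ↦ homEquiv_comp g f
  rw [← homEquiv.comp_surjective, hconj, homEquiv.surjective_comp,
    CharacterModule.dual_surjective_iff_injective]

end RowDual

end RowDual

section Cotorsion

variable {R}

theorem extVanish_one_rowDual_iff {P : Type*} [AddCommGroup P] [Module R P] [Module.Projective R P]
    {M : ModuleCat.{0} R} {π : P →ₗ[R] M} (hπ : Function.Surjective π) {ι : Type*} [Fintype ι]
    (r : ι → R) :
    extVanish R 1 M (ModuleCat.of R (RowDual r)) ↔
      Function.Injective (RowQuotient.map r (LinearMap.ker π).subtype) :=
  (extVanish_one_iff_surjective_domRestrict_ker hπ _).trans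
    (RowDual.surjective_comp_iff_injective_map _)

theorem isFlatMod_iff_forall_extVanish_rowDual (M : ModuleCat.{0} R) :
    IsFlatMod R M ↔ ∀ (ι : Type) [Fintype ι] (r : ι → R),
      extVanish R 1 M (ModuleCat.of R (RowDual r)) := by
  have hπ : Function.Surjective (Finsupp.linearCombination R (id : M → M)) :=
    Finsupp.linearCombination_id_surjective R M
  simp only [extVanish_one_rowDual_iff hπ]
  exact isFlatMod_iff_forall_map_ker_subtype_injective (.finsupp M) hπ

theorem cotorsion_rowDual {ι : Type} [Fintype ι] (r : ι → R) :
    Cotorsion R (ModuleCat.of R (RowDual r)) :=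
  fun F hF ↦ (isFlatMod_iff_forall_extVanish_rowDual F).1 hF ι r

theorem isFlatMod_iff_forall_cotorsion_extVanish (M : ModuleCat.{0} R) :
    IsFlatMod R M ↔ ∀ C : ModuleCat.{0} R, Cotorsion R C → extVanish R 1 M C :=
  ⟨fun hM _ hC ↦ hC M hM, fun h ↦ (isFlatMod_iff_forall_extVanish_rowDual M).2 fun _ _ r ↦
    h _ (cotorsion_rowDual r)⟩

theorem forall_cotorsion_lnInj_iff (n : ℕ) :
    (∀ C : ModuleCat.{0} R, Cotorsion R C → LnInj R n C) ↔
      ∀ M : ModuleCat.{0} R, fdLE R n M → IsFlatMod R M := by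
  simp only [isFlatMod_iff_forall_cotorsion_extVanish, LnInj]
  exact ⟨fun h M hM C hC ↦ h C hC M hM, fun h C hC M hM ↦ h M hM C hC⟩

end Cotorsion

section FlatDimension

variable {R}

theorem fdLE_succ {k : ℕ} {M : ModuleCat.{0} R} (h : fdLE R k M) : fdLE R (k + 1) M := by
  induction k generalizing M with
  | zero =>
    refine ⟨ModuleCat.of R PUnit, M, 0, 𝟙 M, h, Function.injective_of_subsingleton _,
      Function.surjective_id, fun x ↦ ?_, IsFlatMod.of_subsingleton _⟩
    exact ⟨fun hx ↦ ⟨0, (map_zero _).trans hx.symm⟩, fun ⟨_, hy⟩ ↦ hy.symm⟩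
  | succ k ih =>
    obtain ⟨K, F, f, g, hF, hf, hg, hfg, hK⟩ := h
    exact ⟨K, F, f, g, hF, hf, hg, hfg, ih hK⟩

theorem fdLE_monotone (M : ModuleCat.{0} R) : Monotone fun k ↦ fdLE R k M :=
  monotone_nat_of_le_succ fun _ ↦ fdLE_succ

theorem isFlatMod_of_fdLE_of_forall_fdLE_one
    (h : ∀ M : ModuleCat.{0} R, fdLE R 1 M → IsFlatMod R M) {k : ℕ} {M : ModuleCat.{0} R}
    (hM : fdLE R k M) : IsFlatMod R M := by
  induction k generalizing M with
  | zero => exact hM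
  | succ k ih =>
    obtain ⟨K, F, f, g, hF, hf, hg, hfg, hK⟩ := hM
    exact h M ⟨K, F, f, g, hF, hf, hg, hfg, ih hK⟩

theorem forall_fdLE_isFlatMod_iff {n : ℕ} (hn : 1 ≤ n) :
    (∀ M : ModuleCat.{0} R, fdLE R n M → IsFlatMod R M) ↔
      ∀ M : ModuleCat.{0} R, (∃ k, fdLE R k M) → IsFlatMod R M :=
  ⟨fun h _ ⟨_, hM⟩ ↦
      isFlatMod_of_fdLE_of_forall_fdLE_one (fun N hN ↦ h N (fdLE_monotone N hn hN)) hM,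
    fun h M hM ↦ h M ⟨n, hM⟩⟩

end FlatDimension

/-- Every cotorsion module is `L_n`-injective for some (equivalently, every) `n ≥ 1`
iff `l.FFD(R) = 0`, i.e. every module of finite flat dimension is flat. -/
theorem stmt12 :
    ((∃ n : ℕ, 1 ≤ n ∧ ∀ C : ModuleCat.{0} R, Cotorsion R C → LnInj R n C) ↔
      (∀ M : ModuleCat.{0} R, (∃ k, fdLE R k M) → IsFlatMod R M)) ∧
    ((∀ n : ℕ, 1 ≤ n → ∀ C : ModuleCat.{0} R, Cotorsion R C → LnInj R n C) ↔
      (∀ M : ModuleCat.{0} R, (∃ k, fdLE R k M) → IsFlatMod R M)) := by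
  have forall_lnInj_iff {n : ℕ} (hn : 1 ≤ n) :
      (∀ C : ModuleCat.{0} R, Cotorsion R C → LnInj R n C) ↔
        ∀ M : ModuleCat.{0} R, (∃ k, fdLE R k M) → IsFlatMod R M :=
    (forall_cotorsion_lnInj_iff n).trans (forall_fdLE_isFlatMod_iff hn)
  exact ⟨⟨fun ⟨_, hn, h⟩ ↦ (forall_lnInj_iff hn).1 h,
      fun h ↦ ⟨1, le_rfl, (forall_lnInj_iff le_rfl).2 h⟩⟩,
    ⟨fun h ↦ (forall_lnInj_iff le_rfl).1 (h 1 le_rfl), fun h _ hn ↦ (forall_lnInj_iff hn).2 h⟩⟩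
end
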